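/- Let γ > 0, a_n = n^{−γ}, and E = {e^{i a_n} : n ≥ 1} ∪ {e^{−i a_n} : n ≥ 1} ∪ {1}. Then E is an 𝓛₂-set but E is not a 𝒦-set; in particular the class of 𝓛₂-sets is strictly larger than the class of 𝒦-sets. -/

import Mathlib

open MeasureTheory Real Set

noncomputable section

/-- The unit circle in `ℂ`. -/
def circleT : Set ℂ := Metric.sphere (0 : ℂ) 1

/-- Arc-length parametrization of the unit circle. -/
def cpt (θ : ℝ) : ℂ := Complex.exp (θ * Complex.I)

/-- Distance from a point to a set. -/
def dE (E : Set ℂ) (ζ : ℂ) : ℝ := Metric.infDist ζ E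

/-- Arc-length integral over the whole circle. -/
def circInt (f : ℂ → ℝ) : ℝ := ∫ θ in Set.Ioc 0 (2 * π), f (cpt θ)

/-- Arc-length integral over a subset `Λ` of the circle. -/
def circIntOn (Λ : Set ℂ) (f : ℂ → ℝ) : ℝ :=
  ∫ θ in {θ ∈ Set.Ioc 0 (2 * π) | cpt θ ∈ Λ}, f (cpt θ)

/-- `E` has arc-length (Lebesgue) measure zero. -/
def MeasureZeroOnCircle (E : Set ℂ) : Prop :=
  volume {θ ∈ Set.Ioc 0 (2 * π) | cpt θ ∈ E} = 0

/-- `E` is a Carleson set: `∫_𝕋 log dist(ζ,E) |dζ| > -∞`. -/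
def CarlesonSet (E : Set ℂ) : Prop :=
  IntegrableOn (fun θ => Real.log (dE E (cpt θ))) (Set.Ioc 0 (2 * π)) volume

/-- `I(ζ,E)`: the connected component of `𝕋 \ E` containing `ζ`. -/
def compArc (E : Set ℂ) (ζ : ℂ) : Set ℂ := connectedComponentIn (circleT \ E) ζ

/-- `Γ(ζ,E)`. -/
def GammaSet (E : Set ℂ) (ζ : ℂ) : Set ℂ :=
  {ζ' ∈ circleT \ compArc E ζ | dE E ζ' ≤ dE E ζ}

/-- `Σ(ζ,E)`. -/
def SigmaSet (E : Set ℂ) (ζ : ℂ) : Set ℂ :=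
  {ζ' ∈ circleT \ compArc E ζ | dE E ζ ≤ dE E ζ'}

/-- The Richter–Sundberg integrand for the outer function with boundary modulus
`ω(dist(·,E))`. -/
def RSker (ω : ℝ → ℝ) (E : Set ℂ) (ζ ζ' : ℂ) : ℝ :=
  ((ω (dE E ζ')) ^ 2 - (ω (dE E ζ)) ^ 2
    - 2 * (ω (dE E ζ)) ^ 2 * Real.log (ω (dE E ζ') / ω (dE E ζ))) / ‖ζ - ζ'‖ ^ 2

/-- Local Dirichlet integral `D_ζ(f_{ω,E})` (Richter–Sundberg formula). -/
def locDir (ω : ℝ → ℝ) (E : Set ℂ) (ζ : ℂ) : ℝ :=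
  (1 / (2 * π)) * circInt (fun ζ' => RSker ω E ζ ζ')

/-- Local Dirichlet integral restricted to `Λ`. -/
def locDirOn (ω : ℝ → ℝ) (E : Set ℂ) (Λ : Set ℂ) (ζ : ℂ) : ℝ :=
  (1 / (2 * π)) * circIntOn Λ (fun ζ' => RSker ω E ζ ζ')

/-- `E` is an `𝓛₁`-set. -/
def L1Set (E : Set ℂ) : Prop :=
  ∃ C > 0, ∀ ζ ∈ circleT \ E,
    circIntOn (GammaSet E ζ)
      (fun ζ' => Real.log (dE E ζ / dE E ζ') / ‖ζ - ζ'‖ ^ 2) ≤ C / dE E ζ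

/-- The `𝓛₂` inequality with constant `C`. -/
def L2With (E : Set ℂ) (C : ℝ) : Prop :=
  ∀ ζ ∈ circleT \ E,
    circIntOn (GammaSet E ζ)
      (fun ζ' => (Real.log (dE E ζ / dE E ζ')) ^ 2 / ‖ζ - ζ'‖ ^ 2) ≤ C / dE E ζ

/-- `E` is an `𝓛₂`-set. -/
def L2Set (E : Set ℂ) : Prop := ∃ C > 0, L2With E C

/-- Supremum of `dist(·,E)` over the arc `cpt '' (a,b]`. -/
def arcSup (E : Set ℂ) (a b : ℝ) : ℝ := sSup ((fun θ => dE E (cpt θ)) '' Set.Ioc a b)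

/-- `E` is a `𝒦`-set (Kotochigov). -/
def KSet (E : Set ℂ) : Prop :=
  ∃ c > 0, ∀ a b : ℝ, a < b → b ≤ a + 2 * π → c * (b - a) ≤ arcSup E a b

/-- Integral of a weight over the arc `cpt '' (a,b]` (with respect to arc length). -/
def arcInt (w : ℂ → ℝ) (a b : ℝ) : ℝ := ∫ θ in Set.Ioc a b, w (cpt θ)

/-- Double logarithmic integral of a weight over an arc. -/
def arcDouble (w : ℂ → ℝ) (a b : ℝ) : ℝ :=
  ∫ θ in Set.Ioc a b, (∫ θ' in Set.Ioc a b,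
    Real.log (1 / ‖cpt θ - cpt θ'‖) * w (cpt θ) * w (cpt θ'))

/-- Arc-length measure of `{ζ ∈ I : dist(ζ,E) ≤ t}` for the arc `cpt '' (a,b]`. -/
def sublevelMeas (E : Set ℂ) (a b t : ℝ) : ℝ :=
  (volume {θ ∈ Set.Ioc a b | dE E (cpt θ) ≤ t}).toReal

/-- Arc-length measure of `E_t = {ζ ∈ 𝕋 : dist(ζ,E) ≤ t}`. -/
def EtMeas (E : Set ℂ) (t : ℝ) : ℝ := sublevelMeas E 0 (2 * π) t

/-- The open unit disc. -/
def unitDisc : Set ℂ := Metric.ball (0 : ℂ) 1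

/-- Membership in the (holomorphic) Dirichlet space `𝒟`. -/
def MemDirichlet (f : ℂ → ℂ) : Prop :=
  DifferentiableOn ℂ f unitDisc ∧
  (∃ M : ℝ, ∀ r ∈ Set.Ioo (0 : ℝ) 1,
    (∫ θ in Set.Ioc 0 (2 * π), ‖f ((r : ℂ) * cpt θ)‖ ^ 2) ≤ M) ∧
  IntegrableOn (fun z => ‖deriv f z‖ ^ 2) unitDisc volume

/-- `f` is a multiplier of the Dirichlet space `𝒟`. -/
def IsMultiplierD (f : ℂ → ℂ) : Prop :=
  ∀ g : ℂ → ℂ, MemDirichlet g → MemDirichlet (fun z => f z * g z)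

/-- The outer function `f_{ω,E}` with boundary modulus `ω(dist(·,E))`. -/
def outerFun (ω : ℝ → ℝ) (E : Set ℂ) (z : ℂ) : ℂ :=
  Complex.exp ((((2 * π)⁻¹ : ℝ) : ℂ) * ∫ θ in Set.Ioc 0 (2 * π),
    ((cpt θ + z) / (cpt θ - z)) * ((Real.log (ω (dE E (cpt θ))) : ℝ) : ℂ))

/-- `log ω(dist(·,E)) ∈ L¹(𝕋)`. -/
def LogOmegaInt (ω : ℝ → ℝ) (E : Set ℂ) : Prop :=
  IntegrableOn (fun θ => Real.log (ω (dE E (cpt θ)))) (Set.Ioc 0 (2 * π)) volume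

/-- Standing hypotheses on `ω` (with derivative `ω'`): continuous, positive, increasing on
`(0,π]`, differentiable with derivative `ω'`, `t ↦ ω(t^γ)` concave, and `t ↦ tω'(t)/ω(t)`
increasing. -/
def OmegaHyp (ω ω' : ℝ → ℝ) (γ : ℝ) : Prop :=
  ContinuousOn ω (Set.Ioc 0 π) ∧
  (∀ t ∈ Set.Ioc (0 : ℝ) π, 0 < ω t) ∧
  MonotoneOn ω (Set.Ioc 0 π) ∧
  (∀ t ∈ Set.Ioo (0 : ℝ) π, HasDerivAt ω (ω' t) t) ∧
  ConcaveOn ℝ (Set.Ioc 0 (π ^ γ⁻¹)) (fun t => ω (t ^ γ)) ∧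
  MonotoneOn (fun t => t * ω' t / ω t) (Set.Ioo 0 π)

/-- The generalized Cantor set `E_{(ζ_n)}` (with `ξ k` playing the role of `ζ_{k+1}`). -/
def gCantorSet (ξ : ℕ → ℝ) : Set ℂ :=
  {z | ∃ ε : ℕ → Bool, z = Complex.exp (((2 * π : ℝ) : ℂ) * Complex.I *
    ((∑' n : ℕ, (if ε n then (1 : ℝ) else 0) * (∏ k ∈ Finset.range n, ξ k) * (1 - ξ n) : ℝ) : ℂ))}

end

/-!
The 𝓛₂ condition follows from an `A₁` condition on the weight `dist(·, E)^{-ε}` with respect to arc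
length, required only at points `ζ` of the circle and at scales `r ≥ dist(ζ, E) =: τ`. Indeed
`log² x ≲ x^ε` for `x ≥ 1`, and `Γ(ζ, E)` stays at distance at least `τ` from `ζ`, so the `A₁`
bounds on the annuli `2^k τ ≤ |z - ζ| ≤ 2^{k+1} τ`, weighted by `|z - ζ|⁻²`, sum to a multiple of
`1 / τ`.

Both conditions then reduce to distances on the line. The gaps between consecutive points
`a_n = n^{-γ}` satisfy `a_n - a_{n+1} ≍ a_n^κ` with `κ = 1 + 1/γ`. On each gap the mean of
`dist(·, E)^{-ε}` is comparable to `a_n^{-κε}`, so for `κ ε < 1` the `A₁` condition is inherited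
from the weight `|s|^{-κε}`. The 𝒦 condition fails because `dist(e^{iθ}, E) ≲ θ^κ = o(θ)`.
-/

/-! ### Integrals of negative powers -/

lemma lintegral_rpow_neg_Ioc {ε ρ : ℝ} (hε : ε < 1) (hρ : 0 ≤ ρ) :
    ∫⁻ x in Ioc 0 ρ, ENNReal.ofReal (x ^ (-ε)) = ENNReal.ofReal (ρ ^ (1 - ε) / (1 - ε)) := by
  have hint : IntegrableOn (fun x : ℝ => x ^ (-ε)) (Ioc 0 ρ) :=
    (intervalIntegrable_iff_integrableOn_Ioc_of_le hρ).mp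
      (intervalIntegral.intervalIntegrable_rpow' (by linarith))
  rw [← ofReal_integral_eq_lintegral_ofReal hint, ← intervalIntegral.integral_of_le hρ,
    integral_rpow (Or.inl (by linarith)), Real.zero_rpow (by linarith), sub_zero,
    neg_add_eq_sub]
  filter_upwards [ae_restrict_mem measurableSet_Ioc] with x hx
  exact Real.rpow_nonneg hx.1.le _

lemma lintegral_comp_abs (f : ℝ → ENNReal) :
    ∫⁻ x, f |x| = 2 * ∫⁻ x in Ioi 0, f x := by
  have hpos : ∫⁻ x in Ioi 0, f |x| = ∫⁻ x in Ioi 0, f x :=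
    setLIntegral_congr_fun measurableSet_Ioi fun x hx => by rw [abs_of_pos hx]
  have hneg : ∫⁻ x in Iic 0, f |x| = ∫⁻ x in Ioi 0, f x := by
    rw [← hpos, ← setLIntegral_congr Iio_ae_eq_Iic, ← lintegral_indicator measurableSet_Iio,
      ← lintegral_indicator measurableSet_Ioi, ← lintegral_neg_eq_self]
    refine lintegral_congr fun x => ?_
    simp only [indicator, mem_Iio, mem_Ioi, abs_neg, neg_lt_zero]
  rw [← lintegral_add_compl _ (measurableSet_Ioi (a := (0 : ℝ))), compl_Ioi, hpos, hneg, two_mul]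

lemma lintegral_abs_sub_rpow_neg_closedBall {ε ρ : ℝ} (p : ℝ) (hε : ε < 1) (hρ : 0 ≤ ρ) :
    ∫⁻ x in Metric.closedBall p ρ, ENNReal.ofReal (|x - p| ^ (-ε)) =
      ENNReal.ofReal (2 * (ρ ^ (1 - ε) / (1 - ε))) := by
  let f : ℝ → ENNReal := (Iic ρ).indicator fun x => ENNReal.ofReal (x ^ (-ε))
  calc ∫⁻ x in Metric.closedBall p ρ, ENNReal.ofReal (|x - p| ^ (-ε))
      = ∫⁻ x, f |x - p| := by
        rw [← lintegral_indicator Metric.isClosed_closedBall.measurableSet]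
        rfl
    _ = 2 * ∫⁻ x in Ioi 0, f x := by
        rw [lintegral_sub_right_eq_self fun x => f |x|, lintegral_comp_abs]
    _ = 2 * ∫⁻ x in Ioc 0 ρ, ENNReal.ofReal (x ^ (-ε)) := by
        rw [setLIntegral_indicator measurableSet_Iic, inter_comm, Ioi_inter_Iic]
    _ = ENNReal.ofReal (2 * (ρ ^ (1 - ε) / (1 - ε))) := by
        rw [lintegral_rpow_neg_Ioc hε hρ, ENNReal.ofReal_mul zero_le_two, ENNReal.ofReal_ofNat]

lemma setLIntegral_abs_sub_rpow_neg_le {ε v : ℝ} {A : Set ℝ} (p : ℝ) (hε₀ : 0 ≤ ε) (hε : ε < 1)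
    (hv : 0 < v) (hA : volume A ≤ ENNReal.ofReal v) :
    ∫⁻ x in A, ENNReal.ofReal (|x - p| ^ (-ε)) ≤
      ENNReal.ofReal ((1 + 2 / (1 - ε)) * v ^ (1 - ε)) := by
  have : 0 < 1 - ε := by linarith
  have hB : MeasurableSet (Metric.closedBall p v) := Metric.isClosed_closedBall.measurableSet
  have hnear : ∫⁻ x in A ∩ Metric.closedBall p v, ENNReal.ofReal (|x - p| ^ (-ε)) ≤
      ENNReal.ofReal (2 * (v ^ (1 - ε) / (1 - ε))) :=
    (lintegral_mono_set inter_subset_right).trans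
      (lintegral_abs_sub_rpow_neg_closedBall p hε hv.le).le
  have hfar : ∫⁻ x in A \ Metric.closedBall p v, ENNReal.ofReal (|x - p| ^ (-ε)) ≤
      ENNReal.ofReal (v ^ (1 - ε)) :=
    calc ∫⁻ x in A \ Metric.closedBall p v, ENNReal.ofReal (|x - p| ^ (-ε))
        ≤ ∫⁻ _ in A \ Metric.closedBall p v, ENNReal.ofReal (v ^ (-ε)) := by
          refine setLIntegral_mono measurable_const fun x hx => ENNReal.ofReal_le_ofReal ?_
          exact Real.rpow_le_rpow_of_nonpos hv (not_le.mp hx.2).le (by linarith)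
      _ = ENNReal.ofReal (v ^ (-ε)) * volume (A \ Metric.closedBall p v) := setLIntegral_const _ _
      _ ≤ ENNReal.ofReal (v ^ (-ε)) * ENNReal.ofReal v := by
          gcongr
          exact (measure_mono sdiff_subset).trans hA
      _ = ENNReal.ofReal (v ^ (1 - ε)) := by
          rw [← ENNReal.ofReal_mul (by positivity), ← Real.rpow_add_one hv.ne', neg_add_eq_sub]
  rw [← lintegral_inter_add_sdiff _ A hB]
  refine (add_le_add hnear hfar).trans_eq ?_
  rw [← ENNReal.ofReal_add (by positivity) (by positivity)]
  congr 1
  ring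

lemma setLIntegral_abs_rpow_neg_closedBall_le {σ r t : ℝ} (hσ₀ : 0 ≤ σ) (hσ : σ < 1) (hr : 0 < r)
    (ht : 0 < t) :
    ∫⁻ x in Metric.closedBall t r, ENNReal.ofReal (|x| ^ (-σ)) ≤
      ENNReal.ofReal ((1 + 2 / (1 - σ)) * (2 * r * (t / 2) ^ (-σ))) := by
  have : 0 < 1 - σ := by linarith
  rcases le_total (t / 2) r with htr | hrt
  · have h := setLIntegral_abs_sub_rpow_neg_le 0 hσ₀ hσ (by positivity : 0 < 2 * r)
      (Real.volume_closedBall t r).le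
    simp only [sub_zero] at h
    refine h.trans (ENNReal.ofReal_le_ofReal ?_)
    have hmul : (2 * r) ^ (1 - σ) = 2 * r * (2 * r) ^ (-σ) := by
      rw [sub_eq_add_neg, Real.rpow_one_add' (by positivity) (by linarith)]
    rw [hmul]
    have hanti : (2 * r) ^ (-σ) ≤ (t / 2) ^ (-σ) :=
      Real.rpow_le_rpow_of_nonpos (by positivity) (by linarith) (by linarith)
    gcongr
  · have hpt : ∀ x ∈ Metric.closedBall t r, |x| ^ (-σ) ≤ (t / 2) ^ (-σ) := fun x hx => by
      have htx : -r ≤ x - t := (abs_le.mp (Real.dist_eq x t ▸ Metric.mem_closedBall.mp hx)).1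
      have : t / 2 ≤ x := by linarith
      exact Real.rpow_le_rpow_of_nonpos (by positivity) (this.trans (le_abs_self x)) (by linarith)
    calc ∫⁻ x in Metric.closedBall t r, ENNReal.ofReal (|x| ^ (-σ))
        ≤ ∫⁻ _ in Metric.closedBall t r, ENNReal.ofReal ((t / 2) ^ (-σ)) :=
          setLIntegral_mono measurable_const fun x hx => ENNReal.ofReal_le_ofReal (hpt x hx)
      _ = ENNReal.ofReal (2 * r * (t / 2) ^ (-σ)) := by
          rw [setLIntegral_const, Real.volume_closedBall, mul_comm,
            ← ENNReal.ofReal_mul (by positivity)]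
      _ ≤ _ := by
          refine ENNReal.ofReal_le_ofReal (le_mul_of_one_le_left (by positivity) ?_)
          exact le_add_of_nonneg_right (by positivity)

/-! ### Distance weights on the line -/

/-- The `A₁` condition for the weight `dist(·, E)^{-ε}` with respect to `μ`, at points `x ∈ A` and
at scales `r ≥ dist(x, E)` only, which suffices for the `𝓛₂` condition. It is written with quotients
so that the bound holds at the points of `E`, where the weight has the junk value `0 ^ (-ε) = 0`. -/
def IsDistA1On {X : Type*} [PseudoMetricSpace X] [MeasurableSpace X] (μ : Measure X) (A E : Set X)
    (ε M : ℝ) : Prop :=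
  ∀ x ∈ A, ∀ r, Metric.infDist x E ≤ r →
    ∫⁻ y in Metric.closedBall x r,
      ENNReal.ofReal ((Metric.infDist x E / Metric.infDist y E) ^ ε) ∂μ ≤ ENNReal.ofReal (M * r)

lemma iUnion_Ioc_of_antitone {a : ℕ → ℝ} {b : ℝ} (ha : Antitone a)
    (hlim : Filter.Tendsto a Filter.atTop (nhds b)) :
    ⋃ n, Ioc (a (n + 1)) (a n) = Ioc b (a 0) := by
  refine Subset.antisymm (iUnion_subset fun n =>
    Ioc_subset_Ioc (ha.le_of_tendsto hlim _) (ha n.zero_le)) fun s hs => mem_iUnion.mpr ?_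
  classical
  have hex : ∃ k, a k < s := (hlim.eventually_lt_const hs.1).exists
  obtain ⟨m, hm⟩ : ∃ m, Nat.find hex = m + 1 := Nat.exists_eq_succ_of_ne_zero fun h =>
    (h ▸ Nat.find_spec hex).not_ge hs.2
  exact ⟨m, hm ▸ Nat.find_spec hex, not_lt.mp (Nat.find_min hex (hm ▸ m.lt_succ_self))⟩

lemma min_sub_le_infDist {S : Set ℝ} {p q s : ℝ} (hS : S.Nonempty) (hdisj : Disjoint S (Ioo p q)) :
    min (s - p) (q - s) ≤ Metric.infDist s S := by
  refine (Metric.le_infDist hS).mpr fun x hx => ?_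
  rw [Real.dist_eq]
  rcases le_or_gt x p with hxp | hpx
  · exact (min_le_left _ _).trans ((sub_le_sub_left hxp s).trans (le_abs_self _))
  · have hqx : q ≤ x := not_lt.mp fun hxq => disjoint_left.mp hdisj hx ⟨hpx, hxq⟩
    rw [abs_sub_comm]
    exact (min_le_right _ _).trans ((sub_le_sub_right hqx s).trans (le_abs_self _))

lemma min_sub_le_volume_Ioc_inter_closedBall {p q t r : ℝ}
    (hne : (Ioc p q ∩ Metric.closedBall t r).Nonempty) :
    ENNReal.ofReal (min r (q - p)) ≤ volume (Ioc p q ∩ Metric.closedBall t (2 * r)) := by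
  obtain ⟨x, ⟨hpx, hxq⟩, hxt⟩ := hne
  rw [Metric.mem_closedBall, Real.dist_eq, abs_le] at hxt
  set m := min r (q - p)
  have hmr : m ≤ r := min_le_left _ _
  have hmℓ : m ≤ q - p := min_le_right _ _
  set u := max p (x - m)
  have hpu : p ≤ u := le_max_left _ _
  have hxu : x - m ≤ u := le_max_right _ _
  have hm : 0 ≤ m := le_min (by linarith) (sub_nonneg.mpr (hpx.le.trans hxq))
  have hux : u ≤ x := max_le hpx.le (by linarith)
  have huq : u + m ≤ q := by
    rcases max_choice p (x - m) with h | h <;> simp only [u, h] <;> linarith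
  calc ENNReal.ofReal m = volume (Ioc u (u + m)) := by simp
    _ ≤ volume (Ioc p q ∩ Metric.closedBall t (2 * r)) := by
        refine measure_mono fun s hs => ⟨⟨hpu.trans_lt hs.1, hs.2.trans huq⟩, ?_⟩
        rw [Metric.mem_closedBall, Real.dist_eq, abs_le]
        constructor <;> linarith [hs.1, hs.2]

lemma min_rpow_le_add {x y : ℝ} (hx : 0 ≤ x) (hy : 0 ≤ y) (z : ℝ) :
    min x y ^ z ≤ x ^ z + y ^ z := by
  rcases min_choice x y with h | h <;> rw [h]
  · exact le_add_of_nonneg_right (Real.rpow_nonneg hy z)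
  · exact le_add_of_nonneg_left (Real.rpow_nonneg hx z)

lemma infDist_rpow_neg_le_of_mem_gap {S : Set ℝ} {p q s ε : ℝ} (hS : S.Nonempty)
    (hdisj : Disjoint S (Ioo p q)) (hs : s ∈ Ioo p q) (hε₀ : 0 ≤ ε) :
    Metric.infDist s S ^ (-ε) ≤ |s - p| ^ (-ε) + |s - q| ^ (-ε) := by
  have hsp : 0 < s - p := sub_pos.mpr hs.1
  have hsq : 0 < q - s := sub_pos.mpr hs.2
  rw [abs_sub_comm s q, abs_of_pos hsp, abs_of_pos hsq]
  exact (Real.rpow_le_rpow_of_nonpos (lt_min hsp hsq) (min_sub_le_infDist hS hdisj)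
    (neg_nonpos.mpr hε₀)).trans (min_rpow_le_add hsp.le hsq.le _)

lemma setLIntegral_infDist_rpow_neg_le_of_subset_gap {S A : Set ℝ} {p q v ε : ℝ} (hS : S.Nonempty)
    (hdisj : Disjoint S (Ioo p q)) (hApq : A ⊆ Ioo p q) (hv : 0 < v)
    (hA : volume A ≤ ENNReal.ofReal v) (hε₀ : 0 ≤ ε) (hε : ε < 1) :
    ∫⁻ s in A, ENNReal.ofReal (Metric.infDist s S ^ (-ε)) ≤
      ENNReal.ofReal (2 * (1 + 2 / (1 - ε)) * v ^ (1 - ε)) := by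
  have : 0 < 1 - ε := by linarith
  calc ∫⁻ s in A, ENNReal.ofReal (Metric.infDist s S ^ (-ε))
      ≤ ∫⁻ s in A, (ENNReal.ofReal (|s - p| ^ (-ε)) + ENNReal.ofReal (|s - q| ^ (-ε))) := by
        refine setLIntegral_mono (by fun_prop) fun s hs => ?_
        rw [← ENNReal.ofReal_add (by positivity) (by positivity)]
        exact ENNReal.ofReal_le_ofReal (infDist_rpow_neg_le_of_mem_gap hS hdisj (hApq hs) hε₀)
    _ ≤ ENNReal.ofReal ((1 + 2 / (1 - ε)) * v ^ (1 - ε)) +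
          ENNReal.ofReal ((1 + 2 / (1 - ε)) * v ^ (1 - ε)) := by
        rw [lintegral_add_left (by fun_prop)]
        exact add_le_add (setLIntegral_abs_sub_rpow_neg_le p hε₀ hε hv hA)
          (setLIntegral_abs_sub_rpow_neg_le q hε₀ hε hv hA)
    _ = ENNReal.ofReal (2 * (1 + 2 / (1 - ε)) * v ^ (1 - ε)) := by
        rw [← ENNReal.ofReal_add (by positivity) (by positivity)]
        ring_nf

/- The radius doubles on the right because a nonempty `Ioc p q ∩ closedBall t r` may be much shorter
than `min r (q - p)`, whereas `Ioc p q ∩ closedBall t (2 * r)` is not. -/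
lemma setLIntegral_infDist_rpow_neg_gap_le {S : Set ℝ} {p q t r ε : ℝ} (hS : S.Nonempty)
    (hpq : p < q) (hdisj : Disjoint S (Ioo p q)) (hr : 0 < r) (hε₀ : 0 ≤ ε) (hε : ε < 1) :
    ∫⁻ s in Ioc p q ∩ Metric.closedBall t r, ENNReal.ofReal (Metric.infDist s S ^ (-ε)) ≤
      ENNReal.ofReal (2 * (1 + 2 / (1 - ε)) * (r ^ (-ε) + (q - p) ^ (-ε))) *
        volume (Ioc p q ∩ Metric.closedBall t (2 * r)) := by
  have : 0 < 1 - ε := by linarith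
  have hm : 0 < min r (q - p) := lt_min hr (sub_pos.mpr hpq)
  rcases (Ioc p q ∩ Metric.closedBall t r).eq_empty_or_nonempty with hempty | hne
  · simp only [hempty, Measure.restrict_empty, lintegral_zero_measure, zero_le]
  have hfin : volume (Ioc p q ∩ Metric.closedBall t (2 * r)) ≠ ⊤ :=
    measure_ne_top_of_subset inter_subset_left measure_Ioc_lt_top.ne
  have hmv := min_sub_le_volume_Ioc_inter_closedBall hne
  rw [← ENNReal.ofReal_toReal hfin, ENNReal.ofReal_le_ofReal_iff ENNReal.toReal_nonneg] at hmv
  have hvol : volume (Ioo p q ∩ Metric.closedBall t r) ≤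
      volume (Ioc p q ∩ Metric.closedBall t (2 * r)) :=
    measure_mono (inter_subset_inter Ioo_subset_Ioc_self
      (Metric.closedBall_subset_closedBall (by linarith)))
  rw [← ENNReal.ofReal_toReal hfin] at hvol ⊢
  set v := (volume (Ioc p q ∩ Metric.closedBall t (2 * r))).toReal
  have hv : 0 < v := hm.trans_le hmv
  calc ∫⁻ s in Ioc p q ∩ Metric.closedBall t r, ENNReal.ofReal (Metric.infDist s S ^ (-ε))
      = ∫⁻ s in Ioo p q ∩ Metric.closedBall t r, ENNReal.ofReal (Metric.infDist s S ^ (-ε)) :=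
        setLIntegral_congr (Ioo_ae_eq_Ioc.symm.inter (Filter.EventuallyEq.refl _ _))
    _ ≤ ENNReal.ofReal (2 * (1 + 2 / (1 - ε)) * v ^ (1 - ε)) :=
        setLIntegral_infDist_rpow_neg_le_of_subset_gap hS hdisj inter_subset_left hv hvol hε₀ hε
    _ = ENNReal.ofReal (2 * (1 + 2 / (1 - ε)) * v ^ (-ε)) * ENNReal.ofReal v := by
        rw [← ENNReal.ofReal_mul (by positivity), mul_assoc _ (v ^ (-ε)),
          ← Real.rpow_add_one hv.ne', neg_add_eq_sub]
    _ ≤ _ := by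
        gcongr
        exact (Real.rpow_le_rpow_of_nonpos hm hmv (neg_nonpos.mpr hε₀)).trans
          (min_rpow_le_add hr.le (sub_pos.mpr hpq).le _)

section PowerGaps

variable {S : Set ℝ} {a : ℕ → ℝ} {c κ ε : ℝ}

lemma setLIntegral_infDist_rpow_neg_le_of_gaps (hS : S.Nonempty) (ha : StrictAnti a)
    (hlim : Filter.Tendsto a Filter.atTop (nhds 0))
    (hdisj : ∀ n, Disjoint S (Ioo (a (n + 1)) (a n))) (hc : 0 < c) (hκ : 0 ≤ κ)
    (hgap : ∀ n, c * a n ^ κ ≤ a n - a (n + 1)) (hε₀ : 0 ≤ ε) (hε : ε < 1) {t r : ℝ} (hr : 0 < r) :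
    ∫⁻ s in Ioc 0 (a 0) ∩ Metric.closedBall t r, ENNReal.ofReal (Metric.infDist s S ^ (-ε)) ≤
      ENNReal.ofReal (2 * (1 + 2 / (1 - ε))) * ∫⁻ s in Metric.closedBall t (2 * r),
        ENNReal.ofReal (r ^ (-ε) + c ^ (-ε) * |s| ^ (-(κ * ε))) := by
  have : 0 < 1 - ε := by linarith
  have hball : ∀ ρ, MeasurableSet (Metric.closedBall t ρ) := fun ρ =>
    Metric.isClosed_closedBall.measurableSet
  have hsub : ∀ n, Ioc (a (n + 1)) (a n) ⊆ Ioc 0 (a 0) := fun n =>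
    iUnion_Ioc_of_antitone ha.antitone hlim ▸ subset_iUnion (fun n => Ioc (a (n + 1)) (a n)) n
  have hweight : ∀ n, ∀ s ∈ Ioc (a (n + 1)) (a n),
      (a n - a (n + 1)) ^ (-ε) ≤ c ^ (-ε) * |s| ^ (-(κ * ε)) := by
    intro n s hs
    have hs₀ : 0 < s := (hsub n hs).1
    rw [abs_of_pos hs₀, ← mul_neg, Real.rpow_mul hs₀.le, ← Real.mul_rpow hc.le (by positivity)]
    refine Real.rpow_le_rpow_of_nonpos (by positivity) (le_trans ?_ (hgap n)) (by linarith)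
    gcongr
    exact hs.2
  have hpairwise : Pairwise (Function.onFun Disjoint fun n => Ioc (a (n + 1)) (a n)) :=
    ha.antitone.pairwise_disjoint_on_Ioc_succ
  rw [← iUnion_Ioc_of_antitone ha.antitone hlim, iUnion_inter,
    ← lintegral_const_mul _ (by fun_prop)]
  refine (lintegral_iUnion_le _ _).trans (le_trans ?_ (lintegral_mono_set
    (inter_subset_right (s := ⋃ n, Ioc (a (n + 1)) (a n)))))
  rw [iUnion_inter, lintegral_iUnion (fun n => measurableSet_Ioc.inter (hball _))
    (hpairwise.mono fun _ _ h => h.mono inter_subset_left inter_subset_left)]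
  refine ENNReal.tsum_le_tsum fun n => ?_
  refine (setLIntegral_infDist_rpow_neg_gap_le hS (ha n.lt_succ_self) (hdisj n) hr hε₀ hε).trans ?_
  rw [← setLIntegral_const]
  refine setLIntegral_mono' (measurableSet_Ioc.inter (hball _)) fun s hs => ?_
  rw [← ENNReal.ofReal_mul (by positivity)]
  gcongr
  exact hweight n s hs.1

lemma exists_setLIntegral_infDist_rpow_neg_le_of_gaps (hS : S.Nonempty) (ha : StrictAnti a)
    (hlim : Filter.Tendsto a Filter.atTop (nhds 0))
    (hdisj : ∀ n, Disjoint S (Ioo (a (n + 1)) (a n))) (hc : 0 < c) (hκ : 0 ≤ κ)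
    (hgap : ∀ n, c * a n ^ κ ≤ a n - a (n + 1)) (hε₀ : 0 ≤ ε) (hε : ε < 1) (hκε : κ * ε < 1) :
    ∃ M > 0, ∀ t r, 0 < t → 0 < r → ∫⁻ s in Ioc 0 (a 0) ∩ Metric.closedBall t r,
      ENNReal.ofReal (Metric.infDist s S ^ (-ε)) ≤
        ENNReal.ofReal (M * (r ^ (-ε) + t ^ (-(κ * ε))) * r) := by
  have : 0 < 1 - ε := by linarith
  have : 0 < 1 - κ * ε := by linarith
  set K := 2 * (1 + 2 / (1 - ε))
  set L := c ^ (-ε) * (1 + 2 / (1 - κ * ε)) * 2⁻¹ ^ (-(κ * ε))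
  have hK : 0 < K := by positivity
  have hL : 0 < L := by positivity
  refine ⟨4 * K * (1 + L), by positivity, fun t r ht hr => ?_⟩
  have hpow := setLIntegral_abs_rpow_neg_closedBall_le (by positivity) hκε
    (by positivity : 0 < 2 * r) ht
  refine (setLIntegral_infDist_rpow_neg_le_of_gaps hS ha hlim hdisj hc hκ hgap hε₀ hε hr).trans ?_
  calc ENNReal.ofReal K * ∫⁻ s in Metric.closedBall t (2 * r),
        ENNReal.ofReal (r ^ (-ε) + c ^ (-ε) * |s| ^ (-(κ * ε)))
      = ENNReal.ofReal K * (ENNReal.ofReal (r ^ (-ε)) * ENNReal.ofReal (2 * (2 * r)) +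
          ENNReal.ofReal (c ^ (-ε)) * ∫⁻ s in Metric.closedBall t (2 * r),
            ENNReal.ofReal (|s| ^ (-(κ * ε)))) := by
        rw [← Real.volume_closedBall t (2 * r), ← setLIntegral_const,
          ← lintegral_const_mul (ENNReal.ofReal (c ^ (-ε))) (by fun_prop),
          ← lintegral_add_left measurable_const]
        congr 2 with s
        rw [ENNReal.ofReal_add (by positivity) (by positivity), ENNReal.ofReal_mul (by positivity)]
    _ ≤ ENNReal.ofReal K * (ENNReal.ofReal (r ^ (-ε)) * ENNReal.ofReal (2 * (2 * r)) +
          ENNReal.ofReal (c ^ (-ε)) * ENNReal.ofReal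
            ((1 + 2 / (1 - κ * ε)) * (2 * (2 * r) * (t / 2) ^ (-(κ * ε))))) := by gcongr
    _ = ENNReal.ofReal (4 * K * (r ^ (-ε) + L * t ^ (-(κ * ε))) * r) := by
        rw [← ENNReal.ofReal_mul (by positivity), ← ENNReal.ofReal_mul (by positivity),
          ← ENNReal.ofReal_add (by positivity) (by positivity), ← ENNReal.ofReal_mul hK.le,
          div_eq_mul_inv t 2, Real.mul_rpow ht.le (by positivity)]
        congr 1
        ring
    _ ≤ ENNReal.ofReal (4 * K * (1 + L) * (r ^ (-ε) + t ^ (-(κ * ε))) * r) := by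
        have hrε : 0 ≤ r ^ (-ε) := by positivity
        have htε : 0 ≤ t ^ (-(κ * ε)) := by positivity
        rw [mul_assoc (4 * K) (1 + L)]
        gcongr
        nlinarith [mul_nonneg hL.le hrε]

lemma exists_isDistA1On_of_gaps (hS : S.Nonempty) (ha : StrictAnti a)
    (hlim : Filter.Tendsto a Filter.atTop (nhds 0))
    (hdisj : ∀ n, Disjoint S (Ioo (a (n + 1)) (a n))) (hc : 0 < c) (hκ : 0 < κ)
    (hgap : ∀ n, c * a n ^ κ ≤ a n - a (n + 1)) {C : ℝ}
    (hdist : ∀ t ∈ Icc 0 (a 0), Metric.infDist t S ≤ C * t ^ κ)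
    (hε₀ : 0 < ε) (hε : ε < 1) (hκε : κ * ε < 1) :
    ∃ M > 0, IsDistA1On (volume.restrict (Ioc 0 (a 0))) (Icc 0 (a 0)) S ε M := by
  obtain ⟨M, hM, hint⟩ :=
    exists_setLIntegral_infDist_rpow_neg_le_of_gaps hS ha hlim hdisj hc hκ.le hgap hε₀.le hε hκε
  refine ⟨M * (1 + |C| ^ ε), by positivity, fun t ht r hr => ?_⟩
  rcases (Metric.infDist_nonneg (x := t) (s := S)).eq_or_lt with hδ | hδ
  · simp [← hδ, Real.zero_rpow hε₀.ne']
  set δ := Metric.infDist t S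
  have hr₀ : 0 < r := hδ.trans_le hr
  have ht₀ : 0 < t := ht.1.lt_of_ne fun h => hδ.not_ge <|
    (hdist t ht).trans_eq (by rw [← h, Real.zero_rpow hκ.ne', mul_zero])
  have hδr : δ ^ ε * r ^ (-ε) ≤ 1 := by
    rw [Real.rpow_neg hr₀.le, ← div_eq_mul_inv]
    exact div_le_one_of_le₀ (by gcongr) (by positivity)
  have hδt : δ ^ ε * t ^ (-(κ * ε)) ≤ |C| ^ ε := by
    rw [Real.rpow_neg ht₀.le, ← div_eq_mul_inv, div_le_iff₀ (by positivity), Real.rpow_mul ht₀.le,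
      ← Real.mul_rpow (abs_nonneg C) (by positivity)]
    gcongr
    exact (hdist t ht).trans (by gcongr; exact le_abs_self C)
  calc ∫⁻ s in Metric.closedBall t r, ENNReal.ofReal ((δ / Metric.infDist s S) ^ ε)
        ∂(volume.restrict (Ioc 0 (a 0)))
      = ENNReal.ofReal (δ ^ ε) * ∫⁻ s in Ioc 0 (a 0) ∩ Metric.closedBall t r,
          ENNReal.ofReal (Metric.infDist s S ^ (-ε)) := by
        rw [Measure.restrict_restrict Metric.isClosed_closedBall.measurableSet, inter_comm,
          ← lintegral_const_mul' _ _ ENNReal.ofReal_ne_top]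
        refine lintegral_congr fun s => ?_
        rw [← ENNReal.ofReal_mul (by positivity), Real.rpow_neg Metric.infDist_nonneg,
          ← div_eq_mul_inv, Real.div_rpow hδ.le Metric.infDist_nonneg]
    _ ≤ ENNReal.ofReal (δ ^ ε) * ENNReal.ofReal (M * (r ^ (-ε) + t ^ (-(κ * ε))) * r) := by
        gcongr
        exact hint t r ht₀ hr₀
    _ = ENNReal.ofReal (M * (δ ^ ε * r ^ (-ε) + δ ^ ε * t ^ (-(κ * ε))) * r) := by
        rw [← ENNReal.ofReal_mul (by positivity)]
        congr 1
        ring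
    _ ≤ ENNReal.ofReal (M * (1 + |C| ^ ε) * r) := by gcongr

end PowerGaps

/-! ### Dyadic summation -/

lemma sq_log_le_rpow {x ε : ℝ} (hε : 0 < ε) (hx : 1 ≤ x) :
    Real.log x ^ 2 ≤ (2 / ε) ^ 2 * x ^ ε := by
  have hx₀ : 0 ≤ x := zero_le_one.trans hx
  have hlog : Real.log x ≤ x ^ (ε / 2) / (ε / 2) := Real.log_le_rpow_div hx₀ (half_pos hε)
  calc Real.log x ^ 2 ≤ (x ^ (ε / 2) / (ε / 2)) ^ 2 := by
        gcongr
        exact Real.log_nonneg hx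
    _ = (2 / ε) ^ 2 * (x ^ (ε / 2)) ^ 2 := by field_simp
    _ = (2 / ε) ^ 2 * x ^ ε := by
        rw [← Real.rpow_mul_natCast hx₀, Nat.cast_ofNat, div_mul_cancel₀ ε two_ne_zero]

lemma lintegral_mul_inv_dist_sq_le {X : Type*} [PseudoMetricSpace X] [MeasurableSpace X]
    [OpensMeasurableSpace X] {μ : Measure X} {w : X → ENNReal} (hw : Measurable w) {x : X}
    {τ M : ℝ} (hτ : 0 < τ)
    (hball : ∀ r ≥ τ, ∫⁻ y in Metric.closedBall x r, w y ∂μ ≤ ENNReal.ofReal (M * r)) :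
    ∫⁻ y in {y | τ ≤ dist y x}, w y * ENNReal.ofReal ((dist y x ^ 2)⁻¹) ∂μ ≤
      ENNReal.ofReal (4 * M / τ) := by
  let B : ℕ → Set X := fun n => Metric.closedBall x (2 ^ (n + 1) * τ)
  have hB : ∀ n, MeasurableSet (B n) := fun n => Metric.isClosed_closedBall.measurableSet
  have hpt : ∀ y ∈ {y | τ ≤ dist y x}, w y * ENNReal.ofReal ((dist y x ^ 2)⁻¹) ≤
      ∑' n, (B n).indicator w y * ENNReal.ofReal (((2 ^ n * τ) ^ 2)⁻¹) := by
    intro y hy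
    obtain ⟨n, hn, hn'⟩ := exists_nat_pow_near ((one_le_div hτ).mpr hy) one_lt_two
    rw [le_div_iff₀ hτ] at hn
    rw [div_lt_iff₀ hτ] at hn'
    refine le_trans ?_ (ENNReal.le_tsum n)
    rw [indicator_of_mem (show y ∈ B n from hn'.le)]
    gcongr
  have hterm : ∀ n : ℕ, ENNReal.ofReal (M * (2 ^ (n + 1) * τ)) *
      ENNReal.ofReal (((2 ^ n * τ) ^ 2)⁻¹) =
        ENNReal.ofReal (2 * M / τ) * ENNReal.ofReal ((1 / 2) ^ n) := by
    intro n
    rw [← ENNReal.ofReal_mul' (by positivity), ← ENNReal.ofReal_mul' (by positivity)]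
    congr 1
    rw [div_pow, one_pow]
    field_simp
    ring
  calc ∫⁻ y in {y | τ ≤ dist y x}, w y * ENNReal.ofReal ((dist y x ^ 2)⁻¹) ∂μ
      ≤ ∫⁻ y, ∑' n, (B n).indicator w y * ENNReal.ofReal (((2 ^ n * τ) ^ 2)⁻¹) ∂μ :=
        (setLIntegral_mono' (measurableSet_le measurable_const (by fun_prop)) hpt).trans
          (setLIntegral_le_lintegral _ _)
    _ = ∑' n, (∫⁻ y in B n, w y ∂μ) * ENNReal.ofReal (((2 ^ n * τ) ^ 2)⁻¹) := by
        rw [lintegral_tsum fun n => ((hw.indicator (hB n)).mul_const _).aemeasurable]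
        congr 1 with n
        rw [lintegral_mul_const _ (hw.indicator (hB n)), lintegral_indicator (hB n)]
    _ ≤ ∑' n, ENNReal.ofReal (M * (2 ^ (n + 1) * τ)) * ENNReal.ofReal (((2 ^ n * τ) ^ 2)⁻¹) := by
        gcongr with n
        exact hball _ (le_mul_of_one_le_left hτ.le (one_le_pow₀ one_le_two))
    _ = ENNReal.ofReal (4 * M / τ) := by
        simp_rw [hterm]
        rw [ENNReal.tsum_mul_left, ← ENNReal.ofReal_tsum_of_nonneg (fun n => by positivity)
          summable_geometric_two, tsum_geometric_two, ← ENNReal.ofReal_mul' zero_le_two]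
        ring_nf

/-! ### Geometry of the circle -/

lemma norm_of_mem_circleT {z : ℂ} (hz : z ∈ circleT) : ‖z‖ = 1 := mem_sphere_zero_iff_norm.mp hz

lemma cpt_mem_circleT (x : ℝ) : cpt x ∈ circleT :=
  mem_sphere_zero_iff_norm.mpr (Complex.norm_exp_ofReal_mul_I x)

lemma continuous_cpt : Continuous cpt := by
  unfold cpt
  fun_prop

lemma cpt_add (x y : ℝ) : cpt (x + y) = cpt x * cpt y := by
  simp only [cpt, Complex.ofReal_add, add_mul, Complex.exp_add]

lemma cpt_arg {z : ℂ} (hz : z ∈ circleT) : cpt z.arg = z := by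
  simpa [cpt, norm_of_mem_circleT hz] using Complex.norm_mul_exp_arg_mul_I z

lemma periodic_cpt : Function.Periodic cpt (2 * π) := fun x => by
  rw [cpt_add, show cpt (2 * π) = 1 by simp [cpt], mul_one]

lemma arg_cpt {x : ℝ} (hx : x ∈ Ioc (-π) π) : (cpt x).arg = x := by
  rw [cpt, Complex.exp_mul_I]
  exact Complex.arg_cos_add_sin_mul_I hx

lemma abs_arg_cpt {x : ℝ} (hx : |x| ≤ π) : |(cpt x).arg| = |x| := by
  rcases (abs_le.mp hx).1.eq_or_lt with rfl | hlt
  · rw [← periodic_cpt, show -π + 2 * π = π by ring, arg_cpt ⟨by linarith [Real.pi_pos], le_rfl⟩,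
      abs_neg]
  · rw [arg_cpt ⟨hlt, (abs_le.mp hx).2⟩]

lemma norm_cpt_sub_cpt (x y : ℝ) : ‖cpt x - cpt y‖ = 2 * |Real.sin ((x - y) / 2)| := by
  have hfactor : cpt x - cpt y = cpt y * (Complex.exp (Complex.I * ((x - y : ℝ) : ℂ)) - 1) := by
    rw [mul_sub, mul_one, mul_comm Complex.I]
    exact congrArg (· - cpt y) (by rw [← cpt, ← cpt_add, add_sub_cancel])
  rw [hfactor, norm_mul, norm_of_mem_circleT (cpt_mem_circleT y), one_mul,
    Complex.norm_exp_I_mul_ofReal_sub_one, Real.norm_eq_abs, abs_mul, abs_two]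

lemma norm_cpt_sub_cpt_le (x y : ℝ) : ‖cpt x - cpt y‖ ≤ |x - y| := by
  have hsin := Real.abs_sin_le_abs (x := (x - y) / 2)
  rw [abs_div, abs_two] at hsin
  rw [norm_cpt_sub_cpt]
  linarith

lemma norm_cpt_sub_cpt_le_of_abs_le {x y u : ℝ} (huy : |x - u| ≤ |x - y|) (hy : |x - y| ≤ π) :
    ‖cpt x - cpt u‖ ≤ ‖cpt x - cpt y‖ := by
  have habs : ∀ v, |x - v| ≤ π → |Real.sin ((x - v) / 2)| = Real.sin (|x - v| / 2) := fun v hv => by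
    rw [Real.abs_sin_eq_sin_abs_of_abs_le_pi, abs_div, abs_two]
    rw [abs_div, abs_two]
    linarith [Real.pi_pos]
  rw [norm_cpt_sub_cpt, norm_cpt_sub_cpt, habs u (huy.trans hy), habs y hy]
  gcongr
  exact Real.sin_le_sin_of_le_of_le_pi_div_two (by linarith [abs_nonneg (x - u), Real.pi_pos])
    (by linarith) (by linarith)

lemma abs_abs_arg_sub_abs_arg_le {z w : ℂ} (hz : z ∈ circleT) (hw : w ∈ circleT) :
    |(|z.arg| - |w.arg|)| ≤ π / 2 * ‖z - w‖ := by
  have hz₁ := norm_of_mem_circleT hz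
  have hw₁ := norm_of_mem_circleT hw
  refine le_trans ?_ (Complex.angle_le_mul_norm_sub hz₁ hw₁)
  rw [← Complex.angle_one_right (norm_ne_zero_iff.mp (hz₁ ▸ one_ne_zero)),
    ← Complex.angle_one_right (norm_ne_zero_iff.mp (hw₁ ▸ one_ne_zero)), abs_sub_le_iff]
  constructor
  · linarith [InnerProductGeometry.angle_le_angle_add_angle z w 1]
  · rw [InnerProductGeometry.angle_comm z w]
    linarith [InnerProductGeometry.angle_le_angle_add_angle w z 1]

lemma mem_compArc_of_dist_lt {E : Set ℂ} {ζ z : ℂ} (hζ : ζ ∈ circleT) (hz : z ∈ circleT)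
    (h : dist z ζ < dE E ζ) : z ∈ compArc E ζ := by
  obtain ⟨x, y, rfl, rfl, hxy⟩ : ∃ x y, cpt x = ζ ∧ cpt y = z ∧ |x - y| ≤ π := by
    have hquot : z / ζ ∈ circleT := mem_sphere_zero_iff_norm.mpr <| by
      rw [norm_div, norm_of_mem_circleT hz, norm_of_mem_circleT hζ, div_one]
    have hζ₀ : ζ ≠ 0 := norm_ne_zero_iff.mp (norm_of_mem_circleT hζ ▸ one_ne_zero)
    refine ⟨ζ.arg, ζ.arg + (z / ζ).arg, cpt_arg hζ, ?_, ?_⟩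
    · rw [cpt_add, cpt_arg hζ, cpt_arg hquot, mul_div_cancel₀ z hζ₀]
    · simpa using Complex.abs_arg_le_pi (z / ζ)
  have harc : cpt '' uIcc x y ⊆ circleT \ E := by
    rintro _ ⟨u, hu, rfl⟩
    refine ⟨cpt_mem_circleT u, fun huE => h.not_ge ?_⟩
    have huy : |x - u| ≤ |x - y| := by
      simpa only [abs_sub_comm] using abs_sub_left_of_mem_uIcc hu
    calc dE E (cpt x) ≤ dist (cpt x) (cpt u) := Metric.infDist_le_dist_of_mem huE
      _ ≤ dist (cpt x) (cpt y) := by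
        simpa only [dist_eq_norm] using norm_cpt_sub_cpt_le_of_abs_le huy hxy
      _ = dist (cpt y) (cpt x) := dist_comm _ _
  exact (isPreconnected_uIcc.image _ continuous_cpt.continuousOn).subset_connectedComponentIn
    (mem_image_of_mem _ left_mem_uIcc) harc (mem_image_of_mem _ right_mem_uIcc)

lemma dE_le_dist_of_mem_GammaSet {E : Set ℂ} {ζ z : ℂ} (hζ : ζ ∈ circleT)
    (hz : z ∈ GammaSet E ζ) : dE E ζ ≤ dist z ζ :=
  not_lt.mp fun h => hz.1.2 (mem_compArc_of_dist_lt hζ hz.1.1 h)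

/-! ### Arc length -/

/-- Arc length on the unit circle, as a measure on `ℂ`, so that balls of `ℂ` can be used in place of
arcs. -/
noncomputable def arcLength : Measure ℂ := (volume.restrict (Ioc 0 (2 * π))).map cpt

lemma ae_arcLength_mem_circleT : ∀ᵐ z ∂arcLength, z ∈ circleT :=
  (ae_map_iff continuous_cpt.aemeasurable Metric.isClosed_sphere.measurableSet).mpr
    (ae_of_all _ cpt_mem_circleT)

lemma circIntOn_le_of_setLIntegral_le {Λ T : Set ℂ} {f : ℂ → ℝ} {B : ℝ} (hΛT : Λ ⊆ T)
    (hT : MeasurableSet T) (hf : Measurable f) (hf₀ : 0 ≤ f) (hB : 0 ≤ B)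
    (h : ∫⁻ z in T, ENNReal.ofReal (f z) ∂arcLength ≤ ENNReal.ofReal B) : circIntOn Λ f ≤ B := by
  rw [arcLength, setLIntegral_map hT (by fun_prop) continuous_cpt.measurable,
    Measure.restrict_restrict (hT.preimage continuous_cpt.measurable)] at h
  rw [circIntOn, ← ENNReal.ofReal_le_ofReal_iff hB]
  calc ENNReal.ofReal (∫ θ in {θ ∈ Ioc 0 (2 * π) | cpt θ ∈ Λ}, f (cpt θ))
      ≤ ∫⁻ θ in {θ ∈ Ioc 0 (2 * π) | cpt θ ∈ Λ}, ENNReal.ofReal (f (cpt θ)) := by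
        rw [← Real.enorm_of_nonneg (integral_nonneg fun θ => hf₀ (cpt θ))]
        refine (enorm_integral_le_lintegral_enorm _).trans_eq ?_
        simp only [Real.enorm_of_nonneg (hf₀ _)]
    _ ≤ ∫⁻ θ in cpt ⁻¹' T ∩ Ioc 0 (2 * π), ENNReal.ofReal (f (cpt θ)) :=
        lintegral_mono_set fun θ hθ => ⟨hΛT hθ.2, hθ.1⟩
    _ ≤ ENNReal.ofReal B := h

lemma periodic_setLIntegral_Ioc_add_eq {f : ℝ → ENNReal} {T : ℝ} (hf : Function.Periodic f T)
    (hT : 0 < T) (a b : ℝ) : ∫⁻ x in Ioc a (a + T), f x = ∫⁻ x in Ioc b (b + T), f x := by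
  have : VAddInvariantMeasure (AddSubgroup.zmultiples T) ℝ volume :=
    ⟨fun c s _ => measure_preimage_add _ _ _⟩
  exact (isAddFundamentalDomain_Ioc hT a).setLIntegral_eq (isAddFundamentalDomain_Ioc hT b) f
    hf.map_vadd_zmultiples

lemma lintegral_abs_arg_arcLength {f : ℝ → ENNReal} (hf : Measurable f) :
    ∫⁻ z, f |z.arg| ∂arcLength = 2 * ∫⁻ s in Ioc 0 π, f s := by
  have hperiodic : Function.Periodic (fun θ => f |(cpt θ).arg|) (2 * π) := fun θ => by
    simp only [periodic_cpt θ]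
  calc ∫⁻ z, f |z.arg| ∂arcLength
      = ∫⁻ θ in Ioc 0 (0 + 2 * π), f |(cpt θ).arg| := by
        rw [arcLength, lintegral_map (by fun_prop) continuous_cpt.measurable, zero_add]
    _ = ∫⁻ θ in Ioc (-π) (-π + 2 * π), f |(cpt θ).arg| :=
        periodic_setLIntegral_Ioc_add_eq hperiodic Real.two_pi_pos _ _
    _ = ∫⁻ θ in Icc (-π) π, f |θ| := by
        rw [show -π + 2 * π = π by ring, ← setLIntegral_congr Ioc_ae_eq_Icc]
        exact setLIntegral_congr_fun measurableSet_Ioc fun θ hθ => by rw [arg_cpt hθ]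
    _ = ∫⁻ θ, (Iic π).indicator f |θ| := by
        rw [← lintegral_indicator measurableSet_Icc]
        simp only [indicator, mem_Icc, mem_Iic, abs_le]
    _ = 2 * ∫⁻ s in Ioc 0 π, f s := by
        rw [lintegral_comp_abs, setLIntegral_indicator measurableSet_Iic, inter_comm, Ioi_inter_Iic]

/-! ### The `A₁` criterion for `𝓛₂`-sets -/

lemma IsDistA1On.l2Set {E : Set ℂ} {ε M : ℝ} (h : IsDistA1On arcLength circleT E ε M) (hε : 0 < ε)
    (hM : 0 < M) : L2Set E := by
  refine ⟨(2 / ε) ^ 2 * (4 * M), by positivity, fun ζ hζ => ?_⟩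
  obtain ⟨τ, hτζ⟩ : ∃ τ, dE E ζ = τ := ⟨_, rfl⟩
  rw [hτζ]
  rcases (hτζ ▸ Metric.infDist_nonneg : 0 ≤ τ).eq_or_lt with rfl | hτ
  · simp [circIntOn]
  let T : Set ℂ := {z | τ ≤ dist z ζ ∧ dE E z ≤ τ}
  have hT : MeasurableSet T := by
    unfold T dE
    measurability
  let w : ℂ → ENNReal := fun z => ENNReal.ofReal ((τ / Metric.infDist z E) ^ ε)
  have hw : Measurable w := by fun_prop
  have hlog : ∀ z ∈ T, ENNReal.ofReal (Real.log (τ / dE E z) ^ 2 / ‖ζ - z‖ ^ 2) ≤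
      ENNReal.ofReal ((2 / ε) ^ 2) * (w z * ENNReal.ofReal ((dist z ζ ^ 2)⁻¹)) := by
    intro z hz
    rcases (Metric.infDist_nonneg (x := z) (s := E)).eq_or_lt with h₀ | hpos
    · -- here `log (τ / 0) = 0` by the junk values of division and logarithm
      simp [dE, ← h₀]
    rw [← ENNReal.ofReal_mul' (by positivity), ← ENNReal.ofReal_mul (by positivity), ← mul_assoc,
      dist_comm, dist_eq_norm, ← div_eq_mul_inv]
    gcongr
    exact sq_log_le_rpow hε ((one_le_div hpos).mpr hz.2)
  refine circIntOn_le_of_setLIntegral_le (T := T)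
    (fun z hz => ⟨hτζ ▸ dE_le_dist_of_mem_GammaSet hζ.1 hz, hτζ ▸ hz.2⟩) hT
    (by unfold dE; fun_prop) (fun z => by positivity) (by positivity) ?_
  calc ∫⁻ z in T, ENNReal.ofReal (Real.log (τ / dE E z) ^ 2 / ‖ζ - z‖ ^ 2) ∂arcLength
      ≤ ∫⁻ z in T, ENNReal.ofReal ((2 / ε) ^ 2) * (w z * ENNReal.ofReal ((dist z ζ ^ 2)⁻¹))
          ∂arcLength := setLIntegral_mono' hT hlog
    _ ≤ ENNReal.ofReal ((2 / ε) ^ 2) *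
        ∫⁻ z in {z | τ ≤ dist z ζ}, w z * ENNReal.ofReal ((dist z ζ ^ 2)⁻¹) ∂arcLength := by
        rw [lintegral_const_mul _ (by fun_prop)]
        gcongr
        exact fun z hz => hz.1
    _ ≤ ENNReal.ofReal ((2 / ε) ^ 2) * ENNReal.ofReal (4 * M / τ) := by
        gcongr
        exact lintegral_mul_inv_dist_sq_le hw hτ fun r hr => by
          have hζr := h ζ hζ.1 r (hτζ.trans_le hr)
          rwa [show Metric.infDist ζ E = τ from hτζ] at hζr
    _ = ENNReal.ofReal ((2 / ε) ^ 2 * (4 * M) / τ) := by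
        rw [← ENNReal.ofReal_mul (by positivity), mul_div_assoc']

/-- The set of points of the unit circle at angular distance `s ∈ S` from `1`, for `S ⊆ [0, π]`. It
transfers estimates for subsets of the line to symmetric subsets of the circle. -/
def circleOver (S : Set ℝ) : Set ℂ := {z ∈ circleT | |z.arg| ∈ S}

section CircleOver

variable {S : Set ℝ} {z : ℂ}

lemma mem_circleOver_iff (hSπ : S ⊆ Icc 0 π) :
    z ∈ circleOver S ↔ ∃ s ∈ S, z = cpt s ∨ z = cpt (-s) := by
  constructor
  · refine fun hz => ⟨_, hz.2, ?_⟩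
    rcases abs_choice z.arg with h | h <;> simp only [h, neg_neg, cpt_arg hz.1, true_or, or_true]
  · rintro ⟨s, hs, hz⟩
    have habs : |s| = s := abs_of_nonneg (hSπ hs).1
    have hle : |s| ≤ π := habs.trans_le (hSπ hs).2
    rcases hz with rfl | rfl
    · exact ⟨cpt_mem_circleT s, by rwa [abs_arg_cpt hle, habs]⟩
    · exact ⟨cpt_mem_circleT (-s), by rwa [abs_arg_cpt ((abs_neg s).trans_le hle), abs_neg, habs]⟩

lemma circleOver_nonempty (hS : S.Nonempty) (hSπ : S ⊆ Icc 0 π) : (circleOver S).Nonempty :=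
  let ⟨s, hs⟩ := hS
  ⟨cpt s, (mem_circleOver_iff hSπ).mpr ⟨s, hs, Or.inl rfl⟩⟩

lemma dE_circleOver_le (hSπ : S ⊆ Icc 0 π) (hS : S.Nonempty) (hz : z ∈ circleT) :
    dE (circleOver S) z ≤ Metric.infDist |z.arg| S := by
  refine (Metric.le_infDist hS).mpr fun s hs => ?_
  obtain ⟨x, hx, hxz⟩ : ∃ x, cpt x ∈ circleOver S ∧ |z.arg - x| = |(|z.arg| - s)| := by
    simp only [mem_circleOver_iff hSπ]
    rcases abs_choice z.arg with h | h <;> rw [h]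
    · exact ⟨s, ⟨s, hs, Or.inl rfl⟩, rfl⟩
    · exact ⟨-s, ⟨s, hs, Or.inr rfl⟩, by rw [← abs_neg]; congr 1; ring⟩
  calc dE (circleOver S) z ≤ dist (cpt z.arg) (cpt x) := by
        rw [cpt_arg hz]
        exact Metric.infDist_le_dist_of_mem hx
    _ ≤ |z.arg - x| := dist_eq_norm (cpt z.arg) _ ▸ norm_cpt_sub_cpt_le _ _
    _ = dist |z.arg| s := hxz

lemma infDist_abs_arg_le (hSπ : S ⊆ Icc 0 π) (hS : S.Nonempty) (hz : z ∈ circleT) :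
    Metric.infDist |z.arg| S ≤ π / 2 * dE (circleOver S) z := by
  rw [← div_le_iff₀' (by positivity)]
  refine (Metric.le_infDist (circleOver_nonempty hS hSπ)).mpr fun w hw => ?_
  rw [div_le_iff₀' (by positivity), dist_eq_norm]
  exact (Metric.infDist_le_dist_of_mem hw.2).trans (abs_abs_arg_sub_abs_arg_le hz hw.1)

lemma dE_circleOver_div_le (hSπ : S ⊆ Icc 0 π) (hS : S.Nonempty) {w : ℂ} (hz : z ∈ circleT)
    (hw : w ∈ circleT) : dE (circleOver S) z / dE (circleOver S) w ≤
      π / 2 * (Metric.infDist |z.arg| S / Metric.infDist |w.arg| S) := by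
  have hw_le := infDist_abs_arg_le hSπ hS hw
  rcases (Metric.infDist_nonneg (x := |w.arg|) (s := S)).eq_or_lt with h₀ | hpos
  · have : dE (circleOver S) w = 0 :=
      ((dE_circleOver_le hSπ hS hw).trans_eq h₀.symm).antisymm Metric.infDist_nonneg
    simp [this, ← h₀]
  · have hpos' : 0 < dE (circleOver S) w := by
      by_contra! hneg
      nlinarith [Real.pi_pos]
    rw [mul_div_assoc', div_le_div_iff₀ hpos' hpos, mul_right_comm, mul_comm]
    gcongr
    · exact Metric.infDist_nonneg
    · exact dE_circleOver_le hSπ hS hz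

lemma abs_arg_mem_closedBall {ζ : ℂ} {r : ℝ} (hζ : ζ ∈ circleT) (hz : z ∈ circleT)
    (hr : z ∈ Metric.closedBall ζ r) : |z.arg| ∈ Metric.closedBall |ζ.arg| (π / 2 * r) := by
  rw [Metric.mem_closedBall, Real.dist_eq]
  refine (abs_abs_arg_sub_abs_arg_le hz hζ).trans ?_
  gcongr
  exact dist_eq_norm z ζ ▸ hr

lemma isDistA1On_circleOver {ε M : ℝ} (hSπ : S ⊆ Icc 0 π) (hS : S.Nonempty) (hε : 0 ≤ ε)
    (h : IsDistA1On (volume.restrict (Ioc 0 π)) (Icc 0 π) S ε M) :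
    IsDistA1On arcLength circleT (circleOver S) ε (2 * (π / 2) ^ ε * (π / 2) * M) := by
  intro ζ hζ r hr
  obtain ⟨t, ht⟩ : ∃ t, |ζ.arg| = t := ⟨_, rfl⟩
  let w : ℝ → ENNReal := (Metric.closedBall t (π / 2 * r)).indicator fun s =>
    ENNReal.ofReal ((Metric.infDist t S / Metric.infDist s S) ^ ε)
  have hw : Measurable w :=
    Measurable.indicator (by fun_prop) Metric.isClosed_closedBall.measurableSet
  have hpt : ∀ z ∈ circleT, (Metric.closedBall ζ r).indicator (fun z => ENNReal.ofReal
      ((dE (circleOver S) ζ / dE (circleOver S) z) ^ ε)) z ≤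
        ENNReal.ofReal ((π / 2) ^ ε) * w |z.arg| := by
    intro z hz
    refine indicator_apply_le' (fun hzr => ?_) fun _ => zero_le
    rw [show w |z.arg| = _ from
      indicator_of_mem (ht ▸ abs_arg_mem_closedBall hζ hz hzr) _,
      ← ENNReal.ofReal_mul (by positivity),
      ← Real.mul_rpow (by positivity) (div_nonneg Metric.infDist_nonneg Metric.infDist_nonneg)]
    gcongr
    · exact div_nonneg Metric.infDist_nonneg Metric.infDist_nonneg
    · exact ht ▸ dE_circleOver_div_le hSπ hS hζ hz
  calc ∫⁻ z in Metric.closedBall ζ r, ENNReal.ofReal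
        ((dE (circleOver S) ζ / dE (circleOver S) z) ^ ε) ∂arcLength
      ≤ ∫⁻ z, ENNReal.ofReal ((π / 2) ^ ε) * w |z.arg| ∂arcLength := by
        rw [← lintegral_indicator Metric.isClosed_closedBall.measurableSet]
        exact lintegral_mono_ae (ae_arcLength_mem_circleT.mono hpt)
    _ = ENNReal.ofReal ((π / 2) ^ ε) * (2 * ∫⁻ s in Ioc 0 π, w s) := by
        rw [lintegral_const_mul _ (by fun_prop), lintegral_abs_arg_arcLength hw]
    _ ≤ ENNReal.ofReal ((π / 2) ^ ε) * (2 * ENNReal.ofReal (M * (π / 2 * r))) := by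
        gcongr
        rw [lintegral_indicator Metric.isClosed_closedBall.measurableSet]
        refine h t (ht ▸ ⟨abs_nonneg _, Complex.abs_arg_le_pi ζ⟩) _ ?_
        refine (ht ▸ infDist_abs_arg_le hSπ hS hζ).trans ?_
        gcongr
        exact hr
    _ = ENNReal.ofReal (2 * (π / 2) ^ ε * (π / 2) * M * r) := by
        rw [← ENNReal.ofReal_ofNat, ← ENNReal.ofReal_mul zero_le_two,
          ← ENNReal.ofReal_mul (by positivity)]
        ring_nf

end CircleOver

/-! ### Failure of the `𝒦` condition -/

lemma rpow_isLittleO_nhdsGT_zero {κ : ℝ} (hκ : 1 < κ) :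
    (fun θ : ℝ => θ ^ κ) =o[nhdsWithin 0 (Ioi 0)] fun θ : ℝ => θ := by
  have hlim : Filter.Tendsto (fun θ : ℝ => θ ^ (κ - 1)) (nhdsWithin 0 (Ioi 0)) (nhds 0) := by
    simpa only [Real.zero_rpow (sub_pos.mpr hκ).ne'] using
      (Real.continuous_rpow_const (sub_pos.mpr hκ).le).continuousWithinAt.tendsto (x := (0 : ℝ))
  refine (((Asymptotics.isLittleO_one_iff ℝ).mpr hlim).mul_isBigO
    (Asymptotics.isBigO_refl (fun θ => θ) _)).congr' ?_ (.of_eq (by simp))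
  filter_upwards [self_mem_nhdsWithin] with θ hθ
  rw [← Real.rpow_add_one (ne_of_gt hθ), sub_add_cancel]

lemma not_kSet_of_isLittleO {E : Set ℂ}
    (h : (fun θ => dE E (cpt θ)) =o[nhdsWithin 0 (Ioi 0)] fun θ : ℝ => θ) : ¬ KSet E := by
  rintro ⟨c, hc, hK⟩
  obtain ⟨β, hβ, hle⟩ := mem_nhdsGT_iff_exists_Ioc_subset.mp (h.def (half_pos hc))
  have hβ' : 0 < min β (2 * π) := lt_min hβ Real.two_pi_pos
  have hsup : arcSup E 0 (min β (2 * π)) ≤ c / 2 * min β (2 * π) := by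
    refine csSup_le ((nonempty_Ioc.mpr hβ').image _) ?_
    rintro _ ⟨θ, hθ, rfl⟩
    calc dE E (cpt θ) ≤ ‖dE E (cpt θ)‖ := Real.le_norm_self _
      _ ≤ c / 2 * ‖θ‖ := hle ⟨hθ.1, hθ.2.trans (min_le_left _ _)⟩
      _ ≤ c / 2 * min β (2 * π) := by
        rw [Real.norm_of_nonneg hθ.1.le]
        gcongr
        exact hθ.2
  have := (hK 0 _ hβ' (by simp)).trans hsup
  nlinarith

/-! ### The points `e^{± i n^{-γ}}` -/

/-- The sequence `π, 1, 2^{-γ}, 3^{-γ}, …`: the exponents `n^{-γ}`, `n ≥ 1`, preceded by `π` so that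
the gaps between consecutive terms exhaust `(0, π]`. -/
noncomputable def breakPt (γ : ℝ) : ℕ → ℝ
  | 0 => π
  | n + 1 => ((n : ℝ) + 1) ^ (-γ)

/-- The angular distances from `1` of the points of `{e^{± i n^{-γ}} : n ≥ 1} ∪ {1}`. -/
def powAngles (γ : ℝ) : Set ℝ := insert 0 (range fun n => breakPt γ (n + 1))

lemma sub_add_one_rpow_neg_mem_Icc {γ x : ℝ} (hγ : 0 ≤ γ) (hx : 0 < x) :
    x ^ (-γ) - (x + 1) ^ (-γ) ∈ Icc (γ * (x + 1) ^ (-γ - 1)) (γ * x ^ (-γ - 1)) := by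
  have hderiv : ∀ y ∈ Icc x (x + 1), HasDerivAt (fun y : ℝ => y ^ (-γ)) (-γ * y ^ (-γ - 1)) y :=
    fun y hy => Real.hasDerivAt_rpow_const (Or.inl (hx.trans_le hy.1).ne')
  obtain ⟨y, hy, hslope⟩ := exists_hasDerivAt_eq_slope _ _ (lt_add_one x)
    (HasDerivAt.continuousOn hderiv) fun y hy => hderiv y (Ioo_subset_Icc_self hy)
  have hdiff : x ^ (-γ) - (x + 1) ^ (-γ) = γ * y ^ (-γ - 1) := by
    rw [add_sub_cancel_left, div_one] at hslope
    linarith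
  rw [hdiff]
  constructor <;> refine mul_le_mul_of_nonneg_left ?_ hγ
  · exact Real.rpow_le_rpow_of_nonpos (hx.trans hy.1) hy.2.le (by linarith)
  · exact Real.rpow_le_rpow_of_nonpos hx hy.1.le (by linarith)

section BreakPt

variable {γ : ℝ}

lemma breakPt_zero : breakPt γ 0 = π := rfl

lemma breakPt_succ (n : ℕ) : breakPt γ (n + 1) = ((n : ℝ) + 1) ^ (-γ) := rfl

lemma breakPt_one : breakPt γ 1 = 1 := by
  rw [breakPt_succ, Nat.cast_zero, zero_add, Real.one_rpow]

lemma breakPt_pos (n : ℕ) : 0 < breakPt γ n := by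
  cases n with
  | zero => exact Real.pi_pos
  | succ n =>
    rw [breakPt_succ]
    positivity

lemma strictAnti_breakPt (hγ : 0 < γ) : StrictAnti (breakPt γ) := by
  refine strictAnti_nat_of_succ_lt fun n => ?_
  cases n with
  | zero =>
    rw [breakPt_one, breakPt_zero]
    linarith [Real.pi_gt_three]
  | succ n =>
    rw [breakPt_succ, breakPt_succ]
    exact Real.rpow_lt_rpow_of_neg (by positivity) (by push_cast; linarith) (neg_lt_zero.mpr hγ)

lemma tendsto_breakPt (hγ : 0 < γ) : Filter.Tendsto (breakPt γ) Filter.atTop (nhds 0) := by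
  rw [← Filter.tendsto_add_atTop_iff_nat 1]
  exact (tendsto_rpow_neg_atTop hγ).comp
    (tendsto_natCast_atTop_atTop.atTop_add (tendsto_const_nhds (x := (1 : ℝ))))

lemma breakPt_succ_rpow (hγ : γ ≠ 0) (n : ℕ) :
    breakPt γ (n + 1) ^ (1 + 1 / γ) = ((n : ℝ) + 1) ^ (-γ - 1) := by
  rw [breakPt_succ, ← Real.rpow_mul (by positivity)]
  congr 1
  field_simp
  ring

lemma breakPt_succ_sub_mem_Icc (hγ : 0 ≤ γ) (n : ℕ) :
    breakPt γ (n + 1) - breakPt γ (n + 2) ∈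
      Icc (γ * ((n : ℝ) + 2) ^ (-γ - 1)) (γ * ((n : ℝ) + 1) ^ (-γ - 1)) := by
  have h := sub_add_one_rpow_neg_mem_Icc hγ n.cast_add_one_pos
  rw [add_assoc, one_add_one_eq_two] at h
  rwa [breakPt_succ, breakPt_succ, Nat.cast_succ, add_assoc, one_add_one_eq_two]

lemma rpow_two_mul_add_one_le (hγ : 0 ≤ γ + 1) (n : ℕ) :
    (2 * ((n : ℝ) + 1)) ^ (-γ - 1) ≤ ((n : ℝ) + 2) ^ (-γ - 1) :=
  Real.rpow_le_rpow_of_nonpos (by positivity) (by linarith [n.cast_nonneg (α := ℝ)]) (by linarith)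

lemma exists_mul_rpow_le_breakPt_sub (hγ : 0 < γ) :
    ∃ c > 0, ∀ n, c * breakPt γ n ^ (1 + 1 / γ) ≤ breakPt γ n - breakPt γ (n + 1) := by
  have hπ : 0 < π - 1 := by linarith [Real.pi_gt_three]
  refine ⟨min ((π - 1) / π ^ (1 + 1 / γ)) (γ * 2 ^ (-γ - 1)),
    lt_min (by positivity) (by positivity), fun n => ?_⟩
  cases n with
  | zero =>
    rw [breakPt_one, breakPt_zero, ← le_div_iff₀ (by positivity)]
    exact min_le_left _ _
  | succ n =>
    calc _ ≤ γ * 2 ^ (-γ - 1) * breakPt γ (n + 1) ^ (1 + 1 / γ) := by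
          gcongr
          · exact Real.rpow_nonneg (breakPt_pos _).le _
          · exact min_le_right _ _
      _ = γ * (2 * ((n : ℝ) + 1)) ^ (-γ - 1) := by
          rw [breakPt_succ_rpow hγ.ne', Real.mul_rpow zero_le_two (by positivity), mul_assoc]
      _ ≤ γ * ((n : ℝ) + 2) ^ (-γ - 1) := by
          gcongr γ * ?_
          exact rpow_two_mul_add_one_le (by positivity) n
      _ ≤ breakPt γ (n + 1) - breakPt γ (n + 2) := (breakPt_succ_sub_mem_Icc hγ.le n).1

lemma exists_breakPt_sub_le_mul_rpow (hγ : 0 < γ) :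
    ∃ C > 0, ∀ n, breakPt γ n - breakPt γ (n + 1) ≤ C * breakPt γ (n + 1) ^ (1 + 1 / γ) := by
  refine ⟨max π (γ * 2 ^ (γ + 1)), lt_max_of_lt_left Real.pi_pos, fun n => ?_⟩
  cases n with
  | zero =>
    rw [breakPt_one, breakPt_zero, Real.one_rpow, mul_one]
    linarith [le_max_left π (γ * 2 ^ (γ + 1))]
  | succ n =>
    have hpow : ((n : ℝ) + 1) ^ (-γ - 1) = 2 ^ (γ + 1) * (2 * ((n : ℝ) + 1)) ^ (-γ - 1) := by
      rw [Real.mul_rpow zero_le_two (by positivity), ← mul_assoc, ← Real.rpow_add two_pos]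
      simp
    calc breakPt γ (n + 1) - breakPt γ (n + 2) ≤ γ * ((n : ℝ) + 1) ^ (-γ - 1) :=
          (breakPt_succ_sub_mem_Icc hγ.le n).2
      _ = γ * 2 ^ (γ + 1) * (2 * ((n : ℝ) + 1)) ^ (-γ - 1) := by rw [hpow, mul_assoc]
      _ ≤ γ * 2 ^ (γ + 1) * ((n : ℝ) + 2) ^ (-γ - 1) := by
          gcongr γ * 2 ^ (γ + 1) * ?_
          exact rpow_two_mul_add_one_le (by positivity) n
      _ = γ * 2 ^ (γ + 1) * breakPt γ (n + 2) ^ (1 + 1 / γ) := by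
          rw [breakPt_succ_rpow hγ.ne', Nat.cast_succ, add_assoc, one_add_one_eq_two]
      _ ≤ max π (γ * 2 ^ (γ + 1)) * breakPt γ (n + 2) ^ (1 + 1 / γ) := by
          gcongr
          · exact Real.rpow_nonneg (breakPt_pos _).le _
          · exact le_max_right _ _

lemma powAngles_nonempty : (powAngles γ).Nonempty := insert_nonempty _ _

lemma powAngles_subset_Icc (hγ : 0 < γ) : powAngles γ ⊆ Icc 0 π := by
  rintro _ (rfl | ⟨n, rfl⟩)
  · exact left_mem_Icc.mpr Real.pi_pos.le
  · exact ⟨(breakPt_pos _).le, (strictAnti_breakPt hγ).antitone (Nat.zero_le _)⟩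

lemma disjoint_powAngles_Ioo (hγ : 0 < γ) (n : ℕ) :
    Disjoint (powAngles γ) (Ioo (breakPt γ (n + 1)) (breakPt γ n)) := by
  rw [disjoint_left]
  rintro _ (rfl | ⟨k, rfl⟩) ⟨hlt, hlt'⟩
  · exact (breakPt_pos _).not_gt hlt
  · have := (strictAnti_breakPt hγ).lt_iff_gt.mp hlt
    have := (strictAnti_breakPt hγ).lt_iff_gt.mp hlt'
    omega

lemma exists_infDist_powAngles_le (hγ : 0 < γ) :
    ∃ C, ∀ t ∈ Icc 0 π, Metric.infDist t (powAngles γ) ≤ C * t ^ (1 + 1 / γ) := by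
  obtain ⟨C, hC, hgap⟩ := exists_breakPt_sub_le_mul_rpow hγ
  refine ⟨C, fun t ht => ?_⟩
  rcases ht.1.eq_or_lt with rfl | hpos
  · rw [Metric.infDist_zero_of_mem (show (0 : ℝ) ∈ powAngles γ from mem_insert _ _)]
    positivity
  obtain ⟨n, hn⟩ : ∃ n, t ∈ Ioc (breakPt γ (n + 1)) (breakPt γ n) := by
    rw [← mem_iUnion, iUnion_Ioc_of_antitone (strictAnti_breakPt hγ).antitone (tendsto_breakPt hγ)]
    exact ⟨hpos, ht.2⟩
  calc Metric.infDist t (powAngles γ) ≤ |t - breakPt γ (n + 1)| :=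
        Metric.infDist_le_dist_of_mem (mem_insert_of_mem _ (mem_range_self n))
    _ = t - breakPt γ (n + 1) := abs_of_pos (sub_pos.mpr hn.1)
    _ ≤ breakPt γ n - breakPt γ (n + 1) := by linarith [hn.2]
    _ ≤ C * breakPt γ (n + 1) ^ (1 + 1 / γ) := hgap n
    _ ≤ C * t ^ (1 + 1 / γ) := by
      gcongr
      · exact (breakPt_pos _).le
      · exact hn.1.le

lemma l2Set_circleOver_powAngles (hγ : 0 < γ) : L2Set (circleOver (powAngles γ)) := by
  obtain ⟨c, hc, hgap⟩ := exists_mul_rpow_le_breakPt_sub hγ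
  obtain ⟨C, hdist⟩ := exists_infDist_powAngles_le hγ
  -- any `ε` with `(1 + 1 / γ) ε < 1` works
  let ε := γ / (2 * (γ + 1))
  have hε₀ : 0 < ε := by positivity
  have hκε : (1 + 1 / γ) * ε < 1 := by
    rw [show (1 + 1 / γ) * ε = 1 / 2 by simp only [ε]; field_simp]
    exact one_half_lt_one
  have hε : ε < 1 := (le_mul_of_one_le_left hε₀.le (by simp [hγ.le])).trans_lt hκε
  obtain ⟨M, hM, hA1⟩ := exists_isDistA1On_of_gaps powAngles_nonempty (strictAnti_breakPt hγ)
    (tendsto_breakPt hγ) (disjoint_powAngles_Ioo hγ) hc (by positivity) hgap hdist hε₀ hε hκε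
  exact (isDistA1On_circleOver (powAngles_subset_Icc hγ) powAngles_nonempty hε₀.le hA1).l2Set hε₀
    (by positivity)

lemma not_kSet_circleOver_powAngles (hγ : 0 < γ) : ¬ KSet (circleOver (powAngles γ)) := by
  obtain ⟨C, hdist⟩ := exists_infDist_powAngles_le hγ
  have hκ : 1 < 1 + 1 / γ := lt_add_of_pos_right 1 (one_div_pos.mpr hγ)
  refine not_kSet_of_isLittleO <| Asymptotics.IsBigO.trans_isLittleO
    (Asymptotics.IsBigO.of_bound C ?_) (rpow_isLittleO_nhdsGT_zero hκ)
  filter_upwards [Ioo_mem_nhdsGT Real.pi_pos] with θ hθ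
  have harg : |(cpt θ).arg| = θ := by
    rw [abs_arg_cpt ((abs_of_pos hθ.1).trans_le hθ.2.le), abs_of_pos hθ.1]
  calc ‖dE (circleOver (powAngles γ)) (cpt θ)‖
      = dE (circleOver (powAngles γ)) (cpt θ) := Real.norm_of_nonneg Metric.infDist_nonneg
    _ ≤ Metric.infDist θ (powAngles γ) := by
      simpa only [harg] using dE_circleOver_le (powAngles_subset_Icc hγ) powAngles_nonempty
        (cpt_mem_circleT θ)
    _ ≤ C * θ ^ (1 + 1 / γ) := hdist θ ⟨hθ.1.le, hθ.2.le⟩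
    _ = C * ‖θ ^ (1 + 1 / γ)‖ := by rw [Real.norm_of_nonneg (Real.rpow_nonneg hθ.1.le _)]

lemma circleOver_powAngles (hγ : 0 < γ) : circleOver (powAngles γ) =
    {z : ℂ | ∃ n : ℕ, 1 ≤ n ∧
        (z = Complex.exp (Complex.I * (((n : ℝ) ^ (-γ) : ℝ) : ℂ)) ∨
         z = Complex.exp (-(Complex.I * (((n : ℝ) ^ (-γ) : ℝ) : ℂ))))} ∪ {1} := by
  ext z
  rw [mem_circleOver_iff (powAngles_subset_Icc hγ), powAngles, exists_mem_insert,
    exists_range_iff, or_comm]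
  refine or_congr ⟨?_, ?_⟩ (by simp [cpt])
  · rintro ⟨n, hz⟩
    exact ⟨n + 1, n.succ_pos, by simpa [cpt, breakPt_succ, mul_comm] using hz⟩
  · rintro ⟨_ | n, hn, hz⟩
    · simp at hn
    · exact ⟨n, by simpa [cpt, breakPt_succ, mul_comm] using hz⟩

end BreakPt

/-- `E = {e^{± i n^{-γ}} : n ≥ 1} ∪ {1}` is an `𝓛₂`-set but not a `𝒦`-set. -/
theorem statement10 (γ : ℝ) (hγ : 0 < γ) :
    L2Set ({z : ℂ | ∃ n : ℕ, 1 ≤ n ∧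
        (z = Complex.exp (Complex.I * (((n : ℝ) ^ (-γ) : ℝ) : ℂ)) ∨
         z = Complex.exp (-(Complex.I * (((n : ℝ) ^ (-γ) : ℝ) : ℂ))))} ∪ {1}) ∧
    ¬ KSet ({z : ℂ | ∃ n : ℕ, 1 ≤ n ∧
        (z = Complex.exp (Complex.I * (((n : ℝ) ^ (-γ) : ℝ) : ℂ)) ∨
         z = Complex.exp (-(Complex.I * (((n : ℝ) ^ (-γ) : ℝ) : ℂ))))} ∪ {1}) := by
  rw [← circleOver_powAngles hγ]
  exact ⟨l2Set_circleOver_powAngles hγ, not_kSet_circleOver_powAngles hγ⟩
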